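/- Let T > 0, let K be a Volterra kernel on [0,T] satisfying Condition (A) with exponent α ∈ [0, 1/4), and let R(s,t) := ∫_0^{min(s,t)} K(t,r) K(s,r) dr be the associated covariance function. If φ: [0,T]² → ℝ is strongly λ-Hölder bi-continuous with λ > α, or λ-Hölder bi-continuous with λ > 2α, then the 2D Young–Stieltjes integral ∫_{[0,T]²} φ(u,v) dR(u,v) exists (the Riemann–Stieltjes sums Σ_{i,j} φ(u_i,v_j) R(u_i,u_{i+1}; v_j,v_{j+1}) converge as the mesh of the grid partition tends to 0), and its value equals ∫_0^T (K*⊗K*)φ(r,r) dr. -/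

import Mathlib

open MeasureTheory Set

noncomputable section

namespace YS

variable {E : Type*} [NormedAddCommGroup E] [NormedSpace ℝ E]

/-- A Volterra kernel: a measurable `K : ℝ² → ℝ` with `K t s = 0` whenever `s ≥ t`. -/
def IsVolterraKernel (K : ℝ → ℝ → ℝ) : Prop :=
  Measurable (Function.uncurry K) ∧ ∀ t s : ℝ, t ≤ s → K t s = 0

/-- Condition (A) with exponent `α` and constant `C`; here `K' t s` denotes the partial
derivative `∂K(t,s)/∂t`, whose existence is part of the condition. -/
def CondA (T α C : ℝ) (K K' : ℝ → ℝ → ℝ) : Prop :=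
  (∀ s t : ℝ, 0 < s → s < t → t ≤ T → |K t s| ≤ C * s ^ (-α) * (t - s) ^ (-α)) ∧
  ∀ s t : ℝ, 0 < s → s < t → t ≤ T →
    HasDerivAt (fun r => K r s) (K' t s) t ∧ |K' t s| ≤ C * (t - s) ^ (-(α + 1))

/-- The operator `𝒦*`:  `(𝒦*φ)(s) = φ(s)K(T,s) + ∫_s^T [φ(r) − φ(s)] ∂K(r,s)/∂r dr`. -/
def Kstar (T : ℝ) (K K' : ℝ → ℝ → ℝ) (φ : ℝ → E) (s : ℝ) : E :=
  K T s • φ s + ∫ r in s..T, K' r s • (φ r - φ s)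

/-- The operator `A^K`. -/
def AK (T : ℝ) (K' : ℝ → ℝ → ℝ) (φ : ℝ → E) (s : ℝ) : E :=
  ∫ r in s..T, K' r s • (φ r - φ s)

/-- Rectangular increment `f(u₁,u₂;v₁,v₂)`. -/
def rectInc (ψ : ℝ → ℝ → E) (u₁ u₂ v₁ v₂ : ℝ) : E :=
  ψ u₁ v₁ + ψ u₂ v₂ - ψ u₁ v₂ - ψ u₂ v₁

/-- The operator `B^K`. -/
def BK (T : ℝ) (K' : ℝ → ℝ → ℝ) (ψ : ℝ → ℝ → E) (u v : ℝ) : E :=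
  ∫ r₂ in v..T, ∫ r₁ in u..T, (K' r₁ u * K' r₂ v) • rectInc ψ u r₁ v r₂

/-- The operator `𝒦* ⊗ 𝒦*`. -/
def KstarT (T : ℝ) (K K' : ℝ → ℝ → ℝ) (ψ : ℝ → ℝ → E) (u v : ℝ) : E :=
  (K T u * K T v) • ψ u v + K T v • AK T K' (fun x => ψ x v) u +
    K T u • AK T K' (fun y => ψ u y) v + BK T K' ψ u v

/-- A partition `0 = s₀ < s₁ < ⋯ < s_n = T` of `[0,T]`. -/
structure Partition (T : ℝ) where
  n : ℕ
  pts : ℕ → ℝ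
  n_pos : 0 < n
  first : pts 0 = 0
  last : pts n = T
  lt : ∀ i < n, pts i < pts (i + 1)

/-- Mesh of a partition: the largest increment. -/
def Partition.mesh {T : ℝ} (P : Partition T) : ℝ :=
  (Finset.range P.n).sup' (Finset.nonempty_range_iff.mpr P.n_pos.ne')
    fun i => P.pts (i + 1) - P.pts i

/-- One-dimensional step approximation `φ^π`. -/
def step1 {T : ℝ} (P : Partition T) (φ : ℝ → E) (s : ℝ) : E :=
  ∑ i ∈ Finset.range P.n,
    (Set.Ico (P.pts i) (P.pts (i + 1))).indicator (fun _ => φ (P.pts i)) s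

/-- Two-dimensional step approximation `ψ^π` for the grid partition `P × Q`. -/
def step2 {T : ℝ} (P Q : Partition T) (ψ : ℝ → ℝ → E) (u v : ℝ) : E :=
  ∑ i ∈ Finset.range P.n, ∑ j ∈ Finset.range Q.n,
    ((Set.Ico (P.pts i) (P.pts (i + 1))) ×ˢ (Set.Ico (Q.pts j) (Q.pts (j + 1)))).indicator
      (fun _ => ψ (P.pts i) (Q.pts j)) (u, v)

/-- `λ`-Hölder continuity on `[0,T]` with constant `C`. -/
def IsHolderWith (T lam C : ℝ) (φ : ℝ → E) : Prop :=
  ∀ t₁ ∈ Icc (0:ℝ) T, ∀ t₂ ∈ Icc (0:ℝ) T, ‖φ t₁ - φ t₂‖ ≤ C * |t₁ - t₂| ^ lam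

/-- `λ`-Hölder continuity on `[0,T]`. -/
def IsHolder (T lam : ℝ) (φ : ℝ → E) : Prop := ∃ C : ℝ, IsHolderWith T lam C φ

/-- `λ`-Hölder bi-continuity with constant `C`. -/
def IsHolderBiWith (T lam C : ℝ) (ψ : ℝ → ℝ → E) : Prop :=
  (∀ u₁ ∈ Icc (0:ℝ) T, ∀ u₂ ∈ Icc (0:ℝ) T, ∀ v ∈ Icc (0:ℝ) T,
      ‖ψ u₂ v - ψ u₁ v‖ ≤ C * |u₂ - u₁| ^ lam) ∧
  ∀ u ∈ Icc (0:ℝ) T, ∀ v₁ ∈ Icc (0:ℝ) T, ∀ v₂ ∈ Icc (0:ℝ) T,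
      ‖ψ u v₂ - ψ u v₁‖ ≤ C * |v₂ - v₁| ^ lam

/-- `λ`-Hölder bi-continuity. -/
def IsHolderBi (T lam : ℝ) (ψ : ℝ → ℝ → E) : Prop := ∃ C : ℝ, IsHolderBiWith T lam C ψ

/-- Strong `λ`-Hölder bi-continuity with constant `C`. -/
def IsStrongHolderBiWith (T lam C : ℝ) (ψ : ℝ → ℝ → E) : Prop :=
  IsHolderBiWith T lam C ψ ∧
  ∀ u₁ ∈ Icc (0:ℝ) T, ∀ u₂ ∈ Icc (0:ℝ) T, ∀ v₁ ∈ Icc (0:ℝ) T, ∀ v₂ ∈ Icc (0:ℝ) T,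
    ‖rectInc ψ u₁ u₂ v₁ v₂‖ ≤ C * |u₂ - u₁| ^ lam * |v₂ - v₁| ^ lam

/-- Strong `λ`-Hölder bi-continuity. -/
def IsStrongHolderBi (T lam : ℝ) (ψ : ℝ → ℝ → E) : Prop :=
  ∃ C : ℝ, IsStrongHolderBiWith T lam C ψ

/-- The covariance function `R(s,t) = ∫_0^{s∧t} K(t,r)K(s,r) dr` of the Volterra process. -/
def covR (K : ℝ → ℝ → ℝ) (s t : ℝ) : ℝ := ∫ r in (0:ℝ)..(min s t), K t r * K s r

/-- The 2D Riemann–Stieltjes sum of `f` against `g` over the grid partition `P × Q`. -/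
def RSsum {T : ℝ} (P Q : Partition T) (f g : ℝ → ℝ → ℝ) : ℝ :=
  ∑ i ∈ Finset.range P.n, ∑ j ∈ Finset.range Q.n,
    f (P.pts i) (Q.pts j) *
      rectInc g (P.pts i) (P.pts (i + 1)) (Q.pts j) (Q.pts (j + 1))

structure Slice (T r α C D : ℝ) (k k' : ℝ → ℝ) : Prop where
  r0 : 0 < r
  rT : r < T
  C0 : 0 ≤ C
  D0 : 0 ≤ D
  hk0 : ∀ x, x ≤ r → k x = 0
  hder : ∀ x, r < x → x ≤ T → HasDerivAt k (k' x) x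
  hk' : ∀ x, r < x → x ≤ T → |k' x| ≤ C * (x - r) ^ (-(α + 1))
  hkb : ∀ x, r < x → x ≤ T → |k x| ≤ D * (x - r) ^ (-α)

def Hol (T β H : ℝ) (f : ℝ → ℝ) : Prop :=
  ∀ x ∈ Icc (0:ℝ) T, ∀ y ∈ Icc (0:ℝ) T, |f x - f y| ≤ H * |x - y| ^ β

def Lop (T r : ℝ) (k k' f : ℝ → ℝ) : ℝ := f r * k T + ∫ x in r..T, k' x * (f x - f r)

def Lsum {T : ℝ} (P : Partition T) (k f : ℝ → ℝ) : ℝ :=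
  ∑ i ∈ Finset.range P.n, f (P.pts i) * (k (P.pts (i + 1)) - k (P.pts i))

lemma Hol.continuousOn {T β H : ℝ} {f : ℝ → ℝ} (hβ : 0 < β) (hf : Hol T β H f) :
    ContinuousOn f (Icc 0 T) := by
  intro x hx
  rw [ContinuousWithinAt, tendsto_iff_dist_tendsto_zero]
  have h1 : Filter.Tendsto (fun y : ℝ => H * |y - x| ^ β) (nhdsWithin x (Icc 0 T)) (nhds 0) := by
    have : Continuous (fun y : ℝ => H * |y - x| ^ β) := by
      refine continuous_const.mul ?_
      exact Continuous.rpow_const (by fun_prop) (fun _ => Or.inr hβ.le)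
    have h := (this.tendsto x).mono_left (nhdsWithin_le_nhds (s := Icc 0 T))
    simpa [Real.zero_rpow hβ.ne'] using h
  refine squeeze_zero' (Filter.Eventually.of_forall fun _ => dist_nonneg) ?_ h1
  filter_upwards [self_mem_nhdsWithin] with y hy
  rw [Real.dist_eq]
  exact hf y hy x hx

lemma Slice.meas {T r α C D : ℝ} {k k' : ℝ → ℝ} (h : Slice T r α C D k k') :
    AEStronglyMeasurable k' (volume.restrict (Ioc r T)) := by
  have : AEStronglyMeasurable (deriv k) (volume.restrict (Ioc r T)) :=
    (measurable_deriv k).aestronglyMeasurable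
  refine this.congr ?_
  filter_upwards [ae_restrict_mem measurableSet_Ioc] with x hx
  exact (h.hder x hx.1 hx.2).deriv

lemma integral_pow_aux {r s t κ : ℝ} (hκ : 0 < κ) :
    IntervalIntegrable (fun x => (x - r) ^ (κ - 1)) volume s t ∧
    ∫ x in s..t, (x - r) ^ (κ - 1) = ((t - r) ^ κ - (s - r) ^ κ) / κ := by
  constructor
  · have := (intervalIntegral.intervalIntegrable_rpow' (a := s - r) (b := t - r)
      (r := κ - 1) (by linarith)).comp_sub_right r
    simpa using this
  · rw [intervalIntegral.integral_comp_sub_right (fun x => x ^ (κ - 1)) r,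
      integral_rpow (Or.inl (by linarith))]
    simp

/-- basic bound on the pieces -/
lemma Slice.piece {T r α C D β κ δ H : ℝ} {k k' f : ℝ → ℝ} (h : Slice T r α C D k k')
    (hα : 0 ≤ α) (hκ : 0 < κ) (hβ : β = α + 2 * κ) (hH : 0 ≤ H) (hf : Hol T β H f) (hδ : 0 ≤ δ)
    {p s t : ℝ} (hp : r ≤ p) (hps : p = s) (hst : s ≤ t) (htT : t ≤ T) (htd : t - p ≤ δ) :
    IntervalIntegrable (fun x => k' x * (f x - f p)) volume s t ∧
    |∫ x in s..t, k' x * (f x - f p)| ≤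
      C * H * δ ^ κ * (((t - r) ^ κ - (s - r) ^ κ) / κ) := by
  have hr0 := h.r0
  obtain ⟨i1, i2⟩ := integral_pow_aux (r := r) (s := s) (t := t) hκ
  have hb : ∀ x ∈ Ioc s t, ‖k' x * (f x - f p)‖ ≤ C * H * δ ^ κ * (x - r) ^ (κ - 1) := by
    intro x hx
    have hx1 : r < x := by linarith [hx.1]
    have hx2 : x ≤ T := hx.2.trans htT
    rw [norm_mul, Real.norm_eq_abs, Real.norm_eq_abs]
    have e1 := h.hk' x hx1 hx2
    have e2 := hf x ⟨by linarith, hx2⟩ p ⟨by linarith, by linarith⟩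
    have hxp : 0 ≤ x - p := by linarith [hx.1]
    have e3 : |x - p| ^ β ≤ δ ^ κ * (x - r) ^ (α + κ) := by
      rw [abs_of_nonneg hxp, hβ, show α + 2 * κ = κ + (α + κ) by ring,
        Real.rpow_add_of_nonneg hxp hκ.le (by linarith)]
      gcongr
      linarith [hx.2]
    calc |k' x| * |f x - f p| ≤ (C * (x - r) ^ (-(α + 1))) * (H * (δ ^ κ * (x - r) ^ (α + κ))) := by
          have := h.C0
          have hxr : 0 ≤ x - r := by linarith
          gcongr
          exact e2.trans (by gcongr)
      _ = C * H * δ ^ κ * ((x - r) ^ (-(α + 1)) * (x - r) ^ (α + κ)) := by ring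
      _ = _ := by
          rw [← Real.rpow_add (by linarith)]
          ring_nf
  have hint : IntervalIntegrable (fun x => k' x * (f x - f p)) volume s t := by
    rw [intervalIntegrable_iff_integrableOn_Ioc_of_le hst]
    have hsub : Ioc s t ⊆ Ioc r T := Ioc_subset_Ioc (by linarith) htT
    have hsub' : Ioc s t ⊆ Icc 0 T := fun x hx => ⟨by linarith [hx.1], by linarith [hx.2]⟩
    refine Integrable.mono' (g := fun x => C * H * δ ^ κ * (x - r) ^ (κ - 1)) ?_ ?_ ?_
    · have := i1.const_mul (C * H * δ ^ κ)
      rwa [intervalIntegrable_iff_integrableOn_Ioc_of_le hst] at this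
    · refine (h.meas.mono_measure (Measure.restrict_mono hsub le_rfl)).mul ?_
      refine ContinuousOn.aestronglyMeasurable ?_ measurableSet_Ioc
      exact ((hf.continuousOn (by linarith)).mono hsub').sub continuousOn_const
    · filter_upwards [ae_restrict_mem measurableSet_Ioc] with x hx using hb x hx
  refine ⟨hint, ?_⟩
  rw [← Real.norm_eq_abs, ← i2, ← intervalIntegral.integral_const_mul]
  refine intervalIntegral.norm_integral_le_of_norm_le hst ?_ (i1.const_mul _)
  exact Filter.Eventually.of_forall hb

lemma Slice.ftc {T r α C D : ℝ} {k k' : ℝ → ℝ} (h : Slice T r α C D k k') (hα : 0 ≤ α)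
    {s t : ℝ} (hrs : r < s) (hst : s ≤ t) (htT : t ≤ T) :
    IntervalIntegrable k' volume s t ∧ ∫ x in s..t, k' x = k t - k s := by
  have hi : IntervalIntegrable k' volume s t := by
    rw [intervalIntegrable_iff_integrableOn_Ioc_of_le hst]
    have hsub : Ioc s t ⊆ Ioc r T := Ioc_subset_Ioc (by linarith) htT
    refine Integrable.mono' (g := fun x => C * (s - r) ^ (-(α + 1)))
      (integrable_const _) (h.meas.mono_measure (Measure.restrict_mono hsub le_rfl)) ?_
    filter_upwards [ae_restrict_mem measurableSet_Ioc] with x hx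
    refine (h.hk' x (hrs.trans hx.1) (hx.2.trans htT)).trans ?_
    refine mul_le_mul_of_nonneg_left ?_ h.C0
    exact Real.rpow_le_rpow_of_nonpos (by linarith) (by linarith [hx.1]) (by linarith)
  refine ⟨hi, ?_⟩
  refine intervalIntegral.integral_eq_sub_of_hasDerivAt ?_ hi
  intro x hx
  rw [uIcc_of_le hst] at hx
  exact h.hder x (hrs.trans_le hx.1) (hx.2.trans htT)

lemma Partition.mono {T : ℝ} (P : Partition T) {i j : ℕ} (hij : i ≤ j) (hj : j ≤ P.n) :
    P.pts i ≤ P.pts j := by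
  induction j, hij using Nat.le_induction with
  | base => exact le_rfl
  | succ m hm ih => exact (ih (by omega)).trans (P.lt m (by omega)).le

lemma Partition.mem {T : ℝ} (P : Partition T) {i : ℕ} (hi : i ≤ P.n) :
    P.pts i ∈ Icc (0:ℝ) T :=
  ⟨P.first.symm.le.trans (P.mono (Nat.zero_le i) hi), (P.mono hi le_rfl).trans P.last.le⟩

lemma Partition.exists_idx {T : ℝ} (P : Partition T) {r : ℝ} (h0 : 0 ≤ r) (hT : r < T) :
    ∃ i < P.n, P.pts i ≤ r ∧ r < P.pts (i + 1) := by
  by_contra hcon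
  push Not at hcon
  have : ∀ i ≤ P.n, P.pts i ≤ r := by
    intro i
    induction i with
    | zero => intro _; rw [P.first]; exact h0
    | succ m ih => intro hm; exact hcon m (by omega) (ih (by omega))
  have := this P.n le_rfl
  rw [P.last] at this
  linarith

lemma Slice.E1 {T r α C D β κ δ H : ℝ} {k k' f : ℝ → ℝ} (h : Slice T r α C D k k')
    (hα : 0 ≤ α) (hκ : 0 < κ) (hβ : β = α + 2 * κ) (hH : 0 ≤ H) (hf : Hol T β H f) (hδ : 0 ≤ δ)
    (hδT : δ ≤ T) (P : Partition T) (hP : ∀ i < P.n, P.pts (i + 1) - P.pts i ≤ δ)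
    {a : ℕ} (ha : a < P.n) (ha1 : P.pts a ≤ r) (ha2 : r < P.pts (a + 1)) :
    |Lsum P k f - Lop T r k k' f| ≤ H * δ ^ κ * (T ^ κ *
      (D * ((P.pts (a + 1) - P.pts a) / (P.pts (a + 1) - r)) ^ α) + C * T ^ κ / κ) := by
  have hT : 0 < T := h.r0.trans h.rT
  have hr0 := h.r0
  set Z := H * δ ^ κ * (T ^ κ *
      (D * ((P.pts (a + 1) - P.pts a) / (P.pts (a + 1) - r)) ^ α)) with hZ
  have key : ∀ j, a + 1 ≤ j → j ≤ P.n →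
      IntervalIntegrable (fun x => k' x * (f x - f r)) volume r (P.pts j) ∧
      |∑ i ∈ Finset.range j, f (P.pts i) * (k (P.pts (i + 1)) - k (P.pts i)) -
        (f r * k (P.pts j) + ∫ x in r..(P.pts j), k' x * (f x - f r))| ≤
        Z + C * H * δ ^ κ * ((P.pts j - r) ^ κ / κ) := by
    intro j hj
    induction j, hj using Nat.le_induction with
    | base =>
      intro hn
      have hbT := (P.mem hn).2
      obtain ⟨p1, p2⟩ := h.piece hα hκ hβ hH hf hδ le_rfl rfl ha2.le hbT
        (by linarith [hP a ha])
      refine ⟨p1, ?_⟩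
      have hs : ∑ i ∈ Finset.range (a + 1), f (P.pts i) * (k (P.pts (i + 1)) - k (P.pts i)) =
          f (P.pts a) * k (P.pts (a + 1)) := by
        rw [Finset.sum_range_succ, Finset.sum_eq_zero, h.hk0 _ ha1]
        · ring
        · intro i hi
          rw [Finset.mem_range] at hi
          rw [h.hk0 (P.pts i) ((P.mono hi.le ha.le).trans ha1),
            h.hk0 (P.pts (i + 1)) ((P.mono (by omega) ha.le).trans ha1)]
          ring
      rw [hs]
      have e : f (P.pts a) * k (P.pts (a + 1)) - (f r * k (P.pts (a + 1)) +
          ∫ x in r..(P.pts (a + 1)), k' x * (f x - f r)) =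
          (f (P.pts a) - f r) * k (P.pts (a + 1)) -
          ∫ x in r..(P.pts (a + 1)), k' x * (f x - f r) := by ring
      rw [e]
      refine (abs_sub _ _).trans (add_le_add ?_ ?_)
      · rw [abs_mul]
        have q1 := hf (P.pts a) (P.mem ha.le) r ⟨hr0.le, h.rT.le⟩
        have q2 := h.hkb _ ha2 hbT
        have hΔ : 0 ≤ P.pts (a + 1) - P.pts a := by linarith
        have q3 : |P.pts a - r| ^ β ≤ δ ^ κ * T ^ κ * (P.pts (a + 1) - P.pts a) ^ α := by
          rw [abs_sub_comm, abs_of_nonneg (by linarith)]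
          calc (r - P.pts a) ^ β ≤ (P.pts (a + 1) - P.pts a) ^ β := by
                apply Real.rpow_le_rpow <;> linarith
            _ = (P.pts (a + 1) - P.pts a) ^ κ * (P.pts (a + 1) - P.pts a) ^ κ *
                  (P.pts (a + 1) - P.pts a) ^ α := by
                rw [hβ, ← Real.rpow_add_of_nonneg hΔ hκ.le hκ.le,
                  ← Real.rpow_add_of_nonneg hΔ (by linarith) hα]
                ring_nf
            _ ≤ _ := by
                have := hP a ha
                gcongr
                linarith
        calc |f (P.pts a) - f r| * |k (P.pts (a + 1))| ≤
            (H * (δ ^ κ * T ^ κ * (P.pts (a + 1) - P.pts a) ^ α)) *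
              (D * (P.pts (a + 1) - r) ^ (-α)) := by
              have := h.D0
              gcongr
              exact q1.trans (by gcongr)
          _ = Z := by
              rw [hZ, Real.div_rpow hΔ (by linarith), Real.rpow_neg (by linarith)]
              ring
      · refine p2.trans ?_
        rw [sub_self, Real.zero_rpow hκ.ne', sub_zero]
    | succ m hm ih =>
      intro hn
      obtain ⟨j1, j2⟩ := ih (by omega)
      have hmT := (P.mem hn).2
      have hlt := P.lt m (by omega)
      have hrm : r < P.pts m := ha2.trans_le (P.mono hm (by omega))
      obtain ⟨p1, p2⟩ := h.piece hα hκ hβ hH hf hδ hrm.le rfl hlt.le hmT (hP m (by omega))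
      obtain ⟨c1, c2⟩ := h.ftc hα hrm hlt.le hmT
      have e0 : ∀ x, k' x * (f x - f r) = k' x * (f x - f (P.pts m)) +
          (f (P.pts m) - f r) * k' x := fun x => by ring
      have i3 : IntervalIntegrable (fun x => k' x * (f x - f r)) volume
          (P.pts m) (P.pts (m + 1)) := by
        simp_rw [e0]
        exact p1.add (c1.const_mul _)
      have e3 : ∫ x in (P.pts m)..(P.pts (m + 1)), k' x * (f x - f r) =
          (∫ x in (P.pts m)..(P.pts (m + 1)), k' x * (f x - f (P.pts m))) +
          (f (P.pts m) - f r) * (k (P.pts (m + 1)) - k (P.pts m)) := by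
        simp_rw [e0]
        rw [intervalIntegral.integral_add p1 (c1.const_mul _),
          intervalIntegral.integral_const_mul, c2]
      refine ⟨j1.trans i3, ?_⟩
      rw [← intervalIntegral.integral_add_adjacent_intervals j1 i3, e3, Finset.sum_range_succ]
      have : ∀ A B E F G : ℝ, A ≤ Z + C * H * δ ^ κ * ((P.pts m - r) ^ κ / κ) →
          B ≤ C * H * δ ^ κ * (((P.pts (m + 1) - r) ^ κ - (P.pts m - r) ^ κ) / κ) →
          A + B ≤ Z + C * H * δ ^ κ * ((P.pts (m + 1) - r) ^ κ / κ) := by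
        intro A B _ _ _ h1 h2
        refine (add_le_add h1 h2).trans (le_of_eq ?_)
        ring
      refine le_trans ?_ (this _ _ 0 0 0 j2 p2)
      refine le_trans (le_of_eq ?_) (abs_sub _ _)
      congr 1
      ring
  have := (key P.n (by omega) le_rfl).2
  rw [P.last] at this
  refine this.trans ?_
  rw [mul_add]
  refine add_le_add le_rfl ?_
  have h2 : (T - r) ^ κ ≤ T ^ κ := Real.rpow_le_rpow (by linarith [h.rT]) (by linarith) hκ.le
  have hC := h.C0
  calc C * H * δ ^ κ * ((T - r) ^ κ / κ) ≤ C * H * δ ^ κ * (T ^ κ / κ) := by gcongr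
    _ = _ := by ring

lemma Slice.E2 {T r α C D β κ H M : ℝ} {k k' f : ℝ → ℝ} (h : Slice T r α C D k k')
    (hα : 0 ≤ α) (hκ : 0 < κ) (hβ : β = α + 2 * κ) (hH : 0 ≤ H) (hf : Hol T β H f)
    (hM : |f r| ≤ M) :
    |Lop T r k k' f| ≤ M * (D * (T - r) ^ (-α)) + H * T ^ κ * (C * T ^ κ / κ) := by
  have hr0 := h.r0
  have hrT := h.rT
  have hT : 0 < T := hr0.trans hrT
  obtain ⟨p1, p2⟩ := h.piece hα hκ hβ hH hf hT.le le_rfl rfl hrT.le le_rfl (by linarith)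
  refine (abs_add_le _ _).trans (add_le_add ?_ (p2.trans ?_))
  · rw [abs_mul]
    exact mul_le_mul hM (h.hkb T hrT le_rfl) (abs_nonneg _) ((abs_nonneg _).trans hM)
  · rw [sub_self, Real.zero_rpow hκ.ne', sub_zero]
    have h2 : (T - r) ^ κ ≤ T ^ κ := Real.rpow_le_rpow (by linarith) (by linarith) hκ.le
    have hC := h.C0
    calc C * H * T ^ κ * ((T - r) ^ κ / κ) ≤ C * H * T ^ κ * (T ^ κ / κ) := by gcongr
      _ = _ := by ring

lemma Slice.int {T r α C D β κ H : ℝ} {k k' f : ℝ → ℝ} (h : Slice T r α C D k k')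
    (hα : 0 ≤ α) (hκ : 0 < κ) (hβ : β = α + 2 * κ) (hH : 0 ≤ H) (hf : Hol T β H f) :
    IntervalIntegrable (fun x => k' x * (f x - f r)) volume r T :=
  (h.piece hα hκ hβ hH hf (h.r0.trans h.rT).le le_rfl rfl h.rT.le le_rfl
    (by linarith [h.r0])).1

lemma Slice.Lop_sub {T r α C D β κ H H' : ℝ} {k k' f g : ℝ → ℝ} (h : Slice T r α C D k k')
    (hα : 0 ≤ α) (hκ : 0 < κ) (hβ : β = α + 2 * κ) (hH : 0 ≤ H) (hf : Hol T β H f)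
    (hH' : 0 ≤ H') (hg : Hol T β H' g) :
    Lop T r k k' (fun x => f x - g x) = Lop T r k k' f - Lop T r k k' g := by
  unfold Lop
  have : ∀ x, k' x * (f x - g x - (f r - g r)) = k' x * (f x - f r) - k' x * (g x - g r) :=
    fun x => by ring
  simp_rw [this]
  rw [intervalIntegral.integral_sub (h.int hα hκ hβ hH hf) (h.int hα hκ hβ hH' hg)]
  ring

lemma Slice.Lop_sum {T r α C D β κ H : ℝ} {k k' : ℝ → ℝ} (h : Slice T r α C D k k')
    (hα : 0 ≤ α) (hκ : 0 < κ) (hβ : β = α + 2 * κ) (hH : 0 ≤ H) (n : ℕ) (f : ℕ → ℝ → ℝ)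
    (c : ℕ → ℝ) (hf : ∀ i < n, Hol T β H (f i)) :
    Lop T r k k' (fun x => ∑ i ∈ Finset.range n, f i x * c i) =
      ∑ i ∈ Finset.range n, Lop T r k k' (f i) * c i := by
  unfold Lop
  have : ∀ x, k' x * (∑ i ∈ Finset.range n, f i x * c i - ∑ i ∈ Finset.range n, f i r * c i) =
      ∑ i ∈ Finset.range n, c i * (k' x * (f i x - f i r)) := by
    intro x
    rw [← Finset.sum_sub_distrib, Finset.mul_sum]
    exact Finset.sum_congr rfl fun i _ => by ring
  simp_rw [this]
  rw [intervalIntegral.integral_finsetSum]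
  · rw [Finset.sum_mul, ← Finset.sum_add_distrib]
    refine Finset.sum_congr rfl fun i _ => ?_
    rw [intervalIntegral.integral_const_mul]
    ring
  · intro i hi
    exact (h.int hα hκ hβ hH (hf i (Finset.mem_range.1 hi))).const_mul _

lemma KstarT_eq {T r α C D β κ M : ℝ} {K K' : ℝ → ℝ → ℝ} {φ : ℝ → ℝ → ℝ}
    (h : Slice T r α C D (fun x => K x r) (fun x => K' x r))
    (hα : 0 ≤ α) (hκ : 0 < κ) (hβ : β = α + 2 * κ) (hM : 0 ≤ M)
    (hφ : ∀ y ∈ Icc (0:ℝ) T, Hol T β M (fun x => φ x y))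
    (hφ' : ∀ x ∈ Icc (0:ℝ) T, Hol T β M (fun y => φ x y))
    (H : ℝ) (hH : 0 ≤ H)
    (hg : Hol T β H (fun y => Lop T r (fun x => K x r) (fun x => K' x r) (fun x => φ x y))) :
    KstarT T K K' φ r r =
      Lop T r (fun x => K x r) (fun x => K' x r)
        (fun y => Lop T r (fun x => K x r) (fun x => K' x r) (fun x => φ x y)) := by
  have hrm : r ∈ Icc (0:ℝ) T := ⟨h.r0.le, h.rT.le⟩
  have hB : BK T K' φ r r = ∫ y in r..T, K' y r *
      (Lop T r (fun x => K x r) (fun x => K' x r) (fun x => φ x y) -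
        Lop T r (fun x => K x r) (fun x => K' x r) (fun x => φ x r)) -
        K T r * (K' y r * (φ r y - φ r r)) := by
    unfold BK
    refine intervalIntegral.integral_congr ?_
    intro y hy
    rw [uIcc_of_le h.rT.le] at hy
    have hym : y ∈ Icc (0:ℝ) T := ⟨h.r0.le.trans hy.1, hy.2⟩
    have e : ∀ x, (K' x r * K' y r) • rectInc φ r x r y =
        K' y r * (K' x r * (φ x y - φ r y) - K' x r * (φ x r - φ r r)) := by
      intro x
      simp only [rectInc, smul_eq_mul]
      ring
    simp only [e]
    rw [intervalIntegral.integral_const_mul,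
      intervalIntegral.integral_sub (h.int hα hκ hβ hM (hφ y hym)) (h.int hα hκ hβ hM (hφ r hrm))]
    simp only [Lop]
    ring
  rw [intervalIntegral.integral_sub (h.int hα hκ hβ hH hg)
    ((h.int hα hκ hβ hM (hφ' r hrm)).const_mul _), intervalIntegral.integral_const_mul] at hB
  unfold KstarT
  rw [hB]
  simp only [AK, smul_eq_mul, Lop]
  ring

lemma mul_le_sq_aux (a b : ℝ) : a * b ≤ a ^ 2 + b ^ 2 := by
  nlinarith [sq_nonneg (a - b), sq_nonneg (a + b)]

lemma fin_aux (X Y Z : ℝ) : (1 + X + Z) * (1 + Y) + (1 + X) * (1 + Z) ≤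
      6 * (1 + (X ^ 2 + Y ^ 2 + Z ^ 2)) := by
  nlinarith [sq_nonneg (X - Y), sq_nonneg (Z - Y), sq_nonneg (X - Z), sq_nonneg (X - 1),
      sq_nonneg (Y - 1), sq_nonneg (Z - 1)]

set_option maxHeartbeats 1000000 in
lemma Slice.main {T r α C β κ M δ : ℝ} {K K' : ℝ → ℝ → ℝ} {φ : ℝ → ℝ → ℝ}
    (h : Slice T r α C (C * r ^ (-α)) (fun x => K x r) (fun x => K' x r))
    (hα : 0 ≤ α) (hκ : 0 < κ) (hβ : β = α + 2 * κ) (hM : 0 ≤ M)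
    (hφ : IsStrongHolderBiWith T β M φ) (hδ : 0 ≤ δ) (hδT : δ ≤ T)
    (P Q : Partition T) (hP : ∀ i < P.n, P.pts (i + 1) - P.pts i ≤ δ)
    (hQ : ∀ i < Q.n, Q.pts (i + 1) - Q.pts i ≤ δ)
    {a : ℕ} (ha : a < P.n) (ha1 : P.pts a ≤ r) (ha2 : r < P.pts (a + 1))
    {b : ℕ} (hb : b < Q.n) (hb1 : Q.pts b ≤ r) (hb2 : r < Q.pts (b + 1)) :
    |Lsum P (fun x => K x r) (fun x => Lsum Q (fun x => K x r) (fun y => φ x y)) -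
      KstarT T K K' φ r r| ≤ M * δ ^ κ * (6 * (1 + T ^ κ * T ^ κ + T ^ κ +
        2 * (T ^ κ * (C * T ^ κ / κ)) + C * T ^ κ / κ) ^ 2) *
      (1 + 3 * C ^ 2 * (r ^ (-(4 * α)) + (T - r) ^ (-(4 * α)) +
        ((P.pts (a + 1) - P.pts a) / (P.pts (a + 1) - r)) ^ (4 * α) +
        ((Q.pts (b + 1) - Q.pts b) / (Q.pts (b + 1) - r)) ^ (4 * α))) := by
  obtain ⟨⟨hφ1, hφ2⟩, hφ3⟩ := hφ
  have hr0 := h.r0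
  have hrT := h.rT
  have hT : 0 < T := hr0.trans hrT
  have hC := h.C0
  have hD := h.D0
  have hrm : r ∈ Icc (0:ℝ) T := ⟨h.r0.le, h.rT.le⟩
  have hx : ∀ y ∈ Icc (0:ℝ) T, Hol T β M (fun x => φ x y) := by
    intro y hy x hx x' hx'
    exact hφ1 x' hx' x hx y hy
  have hy : ∀ x ∈ Icc (0:ℝ) T, Hol T β M (fun y => φ x y) := by
    intro x hx y hy y' hy'
    exact hφ2 x hx y' hy' y hy
  have hxd : ∀ y ∈ Icc (0:ℝ) T, ∀ y' ∈ Icc (0:ℝ) T,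
      Hol T β (M * |y - y'| ^ β) (fun x => φ x y - φ x y') := by
    intro y hy y' hy' x hx x' hx'
    have := hφ3 x' hx' x hx y' hy' y hy
    rw [Real.norm_eq_abs] at this
    refine le_trans (le_of_eq ?_) (this.trans (le_of_eq ?_))
    · congr 1; simp only [rectInc]; ring
    · ring
  have hyd : ∀ x ∈ Icc (0:ℝ) T, ∀ x' ∈ Icc (0:ℝ) T,
      Hol T β (M * |x - x'| ^ β) (fun y => φ x y - φ x' y) := by
    intro x hx x' hx' y hy y' hy'
    have := hφ3 x' hx' x hx y' hy' y hy
    rw [Real.norm_eq_abs] at this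
    refine le_trans (le_of_eq ?_) (this.trans (le_of_eq ?_))
    · congr 1; simp only [rectInc]; ring
    · ring
  set k := fun x => K x r with hk
  set k' := fun x => K' x r with hk'
  set c0 := T ^ κ with hc0
  set c1 := C * T ^ κ / κ with hc1
  have hc0' : 0 ≤ c0 := by positivity
  have hc1' : 0 ≤ c1 := by positivity
  have hδc : δ ^ κ ≤ c0 := Real.rpow_le_rpow hδ hδT hκ.le
  have hδ0 : 0 ≤ δ ^ κ := by positivity
  set X := C * r ^ (-α) * (T - r) ^ (-α) with hX
  set qP := ((P.pts (a + 1) - P.pts a) / (P.pts (a + 1) - r)) with hqP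
  set qQ := ((Q.pts (b + 1) - Q.pts b) / (Q.pts (b + 1) - r)) with hqQ
  have hqP0 : 0 ≤ qP := div_nonneg (by linarith) (by linarith)
  have hqQ0 : 0 ≤ qQ := div_nonneg (by linarith) (by linarith)
  set YP := C * r ^ (-α) * qP ^ α with hYP
  set YQ := C * r ^ (-α) * qQ ^ α with hYQ
  have hX0 : 0 ≤ X := by have : 0 ≤ T - r := by linarith
                         positivity
  have hYP0 : 0 ≤ YP := by positivity
  have hYQ0 : 0 ≤ YQ := by positivity
  have hd0 : ∀ x y : ℝ, 0 ≤ M * |x - y| ^ β := fun x y => by positivity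
  -- Hölder bounds
  have hgH : Hol T β (M * (X + c0 * c1)) (fun y => Lop T r k k' (fun x => φ x y)) := by
    intro y hy1 y' hy1'
    have e := h.Lop_sub hα hκ hβ hM (hx y hy1) hM (hx y' hy1')
    have := h.E2 (M := M * |y - y'| ^ β) hα hκ hβ (hd0 y y') (hxd y hy1 y' hy1')
      (hφ2 r hrm y' hy1' y hy1)
    rw [e] at this
    refine this.trans (le_of_eq ?_)
    ring
  have hfH : Hol T β (M * (c0 * (c0 * YQ + c1) + (X + c0 * c1)))
      (fun x => Lsum Q k (fun y => φ x y)) := by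
    intro x hx1 x' hx1'
    have e : Lsum Q k (fun y => φ x y) - Lsum Q k (fun y => φ x' y) =
        Lsum Q k (fun y => φ x y - φ x' y) := by
      unfold Lsum
      rw [← Finset.sum_sub_distrib]
      exact Finset.sum_congr rfl fun i _ => by ring
    have t1 := h.E1 hα hκ hβ (hd0 x x') (hyd x hx1 x' hx1') hδ hδT Q hQ hb hb1 hb2
    have t2 := h.E2 (M := M * |x - x'| ^ β) hα hκ hβ (hd0 x x') (hyd x hx1 x' hx1')
      (hφ1 x' hx1' x hx1 r hrm)
    have t3 : M * |x - x'| ^ β * δ ^ κ * (c0 * YQ + c1) ≤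
        M * |x - x'| ^ β * c0 * (c0 * YQ + c1) := by
      have := hd0 x x'
      gcongr
    have t4 : |Lsum Q k (fun y => φ x y - φ x' y)| ≤
        |Lsum Q k (fun y => φ x y - φ x' y) - Lop T r k k' (fun y => φ x y - φ x' y)| +
        |Lop T r k k' (fun y => φ x y - φ x' y)| := by
      have := abs_add_le (Lsum Q k (fun y => φ x y - φ x' y) -
        Lop T r k k' (fun y => φ x y - φ x' y)) (Lop T r k k' (fun y => φ x y - φ x' y))
      simpa using this
    show |Lsum Q k (fun y => φ x y) - Lsum Q k (fun y => φ x' y)| ≤ _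
    rw [e]
    refine t4.trans ((add_le_add (t1.trans t3) t2).trans (le_of_eq ?_))
    ring
  have hH1 : 0 ≤ M * (X + c0 * c1) := by positivity
  have hH2 : 0 ≤ M * (c0 * (c0 * YQ + c1) + (X + c0 * c1)) := by positivity
  have hF := KstarT_eq h hα hκ hβ hM hx hy _ hH1 hgH
  have hcomm : Lop T r k k' (fun x => Lsum Q k (fun y => φ x y)) =
      Lsum Q k (fun y => Lop T r k k' (fun x => φ x y)) := by
    unfold Lsum
    exact h.Lop_sum hα hκ hβ hM Q.n (fun j x => φ x (Q.pts j))
      (fun j => k (Q.pts (j + 1)) - k (Q.pts j)) (fun i hi => hx _ (Q.mem hi.le))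
  have m1 := h.E1 hα hκ hβ hH2 hfH hδ hδT P hP ha ha1 ha2
  have m2 := h.E1 hα hκ hβ hH1 hgH hδ hδT Q hQ hb hb1 hb2
  rw [hcomm] at m1
  rw [hF]
  have m3 := (abs_sub_le (Lsum P k (fun x => Lsum Q k (fun y => φ x y)))
    (Lsum Q k (fun y => Lop T r k k' (fun x => φ x y)))
    (Lop T r k k' (fun y => Lop T r k k' (fun x => φ x y)))).trans (add_le_add m1 m2)
  refine m3.trans ?_
  set c := 1 + c0 * c0 + c0 + 2 * (c0 * c1) + c1 with hc
  have hcc : 0 ≤ c0 * c0 := by positivity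
  have hcc1 : 0 ≤ c0 * c1 := by positivity
  have hcp : 0 ≤ c := by positivity
  have b1 : c0 * (c0 * YQ + c1) + (X + c0 * c1) ≤ c * (1 + X + YQ) := by
    have : 0 ≤ (c - c0 * c0) * YQ + (c - 1) * X + (c - 2 * (c0 * c1)) :=
      add_nonneg (add_nonneg (mul_nonneg (by linarith) hYQ0) (mul_nonneg (by linarith) hX0))
        (by linarith)
    linarith
  have b2 : ∀ Y, 0 ≤ Y → c0 * Y + c1 ≤ c * (1 + Y) := by
    intro Y hY
    have : 0 ≤ (c - c0) * Y + (c - c1) := add_nonneg (mul_nonneg (by linarith) hY) (by linarith)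
    linarith
  have b3 : X + c0 * c1 ≤ c * (1 + X) := by
    have : 0 ≤ (c - 1) * X + (c - c0 * c1) :=
      add_nonneg (mul_nonneg (by linarith) hX0) (by linarith)
    linarith
  have sq : ∀ z : ℝ, 0 ≤ z → (z ^ α) ^ 2 = z ^ (2 * α) ∧ (z ^ (2 * α)) ^ 2 = z ^ (4 * α) := by
    intro z hz
    rw [← Real.rpow_natCast, ← Real.rpow_natCast, ← Real.rpow_mul hz, ← Real.rpow_mul hz]
    constructor <;> congr 1 <;> push_cast <;> ring
  have sqn : ∀ z : ℝ, 0 ≤ z →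
      (z ^ (-α)) ^ 2 = z ^ (-(2 * α)) ∧ (z ^ (-(2 * α))) ^ 2 = z ^ (-(4 * α)) := by
    intro z hz
    rw [← Real.rpow_natCast, ← Real.rpow_natCast, ← Real.rpow_mul hz, ← Real.rpow_mul hz]
    constructor <;> congr 1 <;> push_cast <;> ring
  have amgm : ∀ A B : ℝ, (C * A * B) ^ 2 ≤ C ^ 2 * ((A ^ 2) ^ 2 + (B ^ 2) ^ 2) := by
    intro A B
    have : A ^ 2 * B ^ 2 ≤ (A ^ 2) ^ 2 + (B ^ 2) ^ 2 := by
      exact mul_le_sq_aux _ _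
    calc (C * A * B) ^ 2 = C ^ 2 * (A ^ 2 * B ^ 2) := by ring
      _ ≤ _ := by gcongr
  have X2 : X ^ 2 ≤ C ^ 2 * (r ^ (-(4 * α)) + (T - r) ^ (-(4 * α))) := by
    refine (amgm _ _).trans (le_of_eq ?_)
    rw [(sqn r hr0.le).1, (sqn r hr0.le).2, (sqn (T - r) (by linarith)).1,
      (sqn (T - r) (by linarith)).2]
  have YP2 : YP ^ 2 ≤ C ^ 2 * (r ^ (-(4 * α)) + qP ^ (4 * α)) := by
    refine (amgm _ _).trans (le_of_eq ?_)
    rw [(sqn r hr0.le).1, (sqn r hr0.le).2, (sq qP hqP0).1, (sq qP hqP0).2]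
  have YQ2 : YQ ^ 2 ≤ C ^ 2 * (r ^ (-(4 * α)) + qQ ^ (4 * α)) := by
    refine (amgm _ _).trans (le_of_eq ?_)
    rw [(sqn r hr0.le).1, (sqn r hr0.le).2, (sq qQ hqQ0).1, (sq qQ hqQ0).2]
  have p1 : 0 ≤ C ^ 2 * (T - r) ^ (-(4 * α)) := by
    have : 0 ≤ T - r := by linarith
    positivity
  have p2 : 0 ≤ C ^ 2 * qP ^ (4 * α) := by positivity
  have p3 : 0 ≤ C ^ 2 * qQ ^ (4 * α) := by positivity
  have fin1 : (1 + X + YQ) * (1 + YP) + (1 + X) * (1 + YQ) ≤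
      6 * (1 + (X ^ 2 + YP ^ 2 + YQ ^ 2)) := by
    exact fin_aux X YP YQ
  have hMd : 0 ≤ M * δ ^ κ := by positivity
  calc M * (c0 * (c0 * YQ + c1) + (X + c0 * c1)) * δ ^ κ * (c0 * YP + c1) +
        M * (X + c0 * c1) * δ ^ κ * (c0 * YQ + c1)
      = M * δ ^ κ * ((c0 * (c0 * YQ + c1) + (X + c0 * c1)) * (c0 * YP + c1) +
        (X + c0 * c1) * (c0 * YQ + c1)) := by ring
    _ ≤ M * δ ^ κ * ((c * (1 + X + YQ)) * (c * (1 + YP)) + (c * (1 + X)) * (c * (1 + YQ))) := by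
        have := b2 YP hYP0
        have := b2 YQ hYQ0
        gcongr
    _ = M * δ ^ κ * (c ^ 2 * ((1 + X + YQ) * (1 + YP) + (1 + X) * (1 + YQ))) := by ring
    _ ≤ M * δ ^ κ * (c ^ 2 * (6 * (1 + (X ^ 2 + YP ^ 2 + YQ ^ 2)))) := by gcongr
    _ ≤ M * δ ^ κ * (c ^ 2 * (6 * (1 + 3 * C ^ 2 * (r ^ (-(4 * α)) + (T - r) ^ (-(4 * α)) +
        qP ^ (4 * α) + qQ ^ (4 * α))))) := by
        gcongr
        linarith
    _ = _ := by ring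

def EP {T : ℝ} (P : Partition T) (γ : ℝ) (r : ℝ) : ℝ :=
  ∑ i ∈ Finset.range P.n, (Set.Ico (P.pts i) (P.pts (i + 1))).indicator
    (fun r => ((P.pts (i + 1) - P.pts i) / (P.pts (i + 1) - r)) ^ γ) r

lemma EP_ind_nonneg {a b γ : ℝ} (hab : a < b) (r : ℝ) :
    0 ≤ (Set.Ico a b).indicator (fun r => ((b - a) / (b - r)) ^ γ) r := by
  refine Set.indicator_nonneg ?_ r
  intro x hx
  have h1 : 0 < b - x := by linarith [hx.2]
  have h2 : 0 < b - a := by linarith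
  positivity

lemma le_EP {T : ℝ} (P : Partition T) (γ : ℝ) {r : ℝ} {a : ℕ} (ha : a < P.n)
    (ha1 : P.pts a ≤ r) (ha2 : r < P.pts (a + 1)) :
    ((P.pts (a + 1) - P.pts a) / (P.pts (a + 1) - r)) ^ γ ≤ EP P γ r := by
  have := Finset.single_le_sum (f := fun i => (Set.Ico (P.pts i) (P.pts (i + 1))).indicator
    (fun r => ((P.pts (i + 1) - P.pts i) / (P.pts (i + 1) - r)) ^ γ) r)
    (s := Finset.range P.n) (fun i hi => EP_ind_nonneg (P.lt i (Finset.mem_range.1 hi)) r)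
    (Finset.mem_range.2 ha)
  refine le_trans (le_of_eq ?_) this
  have hm : r ∈ Set.Ico (P.pts a) (P.pts (a + 1)) := ⟨ha1, ha2⟩
  rw [Set.indicator_of_mem hm]

lemma rpow_sub_int {a b γ : ℝ} (hγ : γ < 1) (t : ℝ) :
    IntervalIntegrable (fun r => (t - r) ^ (-γ)) volume a b := by
  have := (intervalIntegral.intervalIntegrable_rpow' (a := t - a) (b := t - b)
      (r := -γ) (by linarith)).comp_sub_left t
  simpa using this

lemma EP_piece {a b γ : ℝ} (hab : a < b) (hγ : γ < 1) :
    Integrable ((Set.Ico a b).indicator (fun r => ((b - a) / (b - r)) ^ γ)) ∧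
    ∫ r, (Set.Ico a b).indicator (fun r => ((b - a) / (b - r)) ^ γ) r = (b - a) / (1 - γ) := by
  have hba : 0 < b - a := by linarith
  have e : (Set.Ico a b).indicator (fun r => ((b - a) / (b - r)) ^ γ) =
      (Set.Ico a b).indicator (fun r => (b - a) ^ γ * (b - r) ^ (-γ)) := by
    refine Set.indicator_congr ?_
    intro x hx
    have h1 : 0 < b - x := by linarith [hx.2]
    show ((b - a) / (b - x)) ^ γ = (b - a) ^ γ * (b - x) ^ (-γ)
    rw [Real.div_rpow hba.le h1.le, Real.rpow_neg h1.le, div_eq_mul_inv]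
  have hi := (rpow_sub_int (a := a) (b := b) hγ b).const_mul ((b - a) ^ γ)
  rw [e]
  constructor
  · rw [integrable_indicator_iff measurableSet_Ico, integrableOn_congr_set_ae Ico_ae_eq_Ioc,
      ← intervalIntegrable_iff_integrableOn_Ioc_of_le hab.le]
    exact hi
  · rw [integral_indicator measurableSet_Ico, integral_Ico_eq_integral_Ioc,
      ← intervalIntegral.integral_of_le hab.le, intervalIntegral.integral_const_mul,
      intervalIntegral.integral_comp_sub_left (fun x => x ^ (-γ)) b,
      integral_rpow (Or.inl (by linarith)), sub_self, Real.zero_rpow (by linarith), sub_zero,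
      ← mul_div_assoc, ← Real.rpow_add hba]
    rw [show γ + (-γ + 1) = 1 by ring, Real.rpow_one, show -γ + 1 = 1 - γ by ring]

lemma EP_int {T : ℝ} (P : Partition T) {γ : ℝ} (hγ : γ < 1) :
    Integrable (EP P γ) ∧ ∫ r, EP P γ r = T / (1 - γ) := by
  constructor
  · unfold EP
    exact integrable_finsetSum _ fun i hi =>
      (EP_piece (P.lt i (Finset.mem_range.1 hi)) hγ).1
  · unfold EP
    rw [integral_finsetSum _ fun i hi => (EP_piece (P.lt i (Finset.mem_range.1 hi)) hγ).1]
    rw [Finset.sum_congr rfl fun i hi => (EP_piece (P.lt i (Finset.mem_range.1 hi)) hγ).2,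
      ← Finset.sum_div, Finset.sum_range_sub, P.first, P.last, sub_zero]

lemma EP_nonneg {T : ℝ} (P : Partition T) (γ r : ℝ) : 0 ≤ EP P γ r :=
  Finset.sum_nonneg fun i hi => EP_ind_nonneg (P.lt i (Finset.mem_range.1 hi)) r

def GG {T : ℝ} (P Q : Partition T) (α C r : ℝ) : ℝ :=
  1 + 3 * C ^ 2 * (r ^ (-(4 * α)) + (T - r) ^ (-(4 * α)) + EP P (4 * α) r + EP Q (4 * α) r)

lemma GG_bound (T α C : ℝ) (hT : 0 < T) (hα' : α < 1 / 4) :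
    ∃ W : ℝ, 0 < W ∧ ∀ P Q : Partition T, IntervalIntegrable (GG P Q α C) volume 0 T ∧
      ∫ r in (0:ℝ)..T, GG P Q α C r ≤ W := by
  have i1 : IntervalIntegrable (fun r : ℝ => r ^ (-(4 * α))) volume 0 T :=
    intervalIntegral.intervalIntegrable_rpow' (by linarith)
  have i2 : IntervalIntegrable (fun r : ℝ => (T - r) ^ (-(4 * α))) volume 0 T :=
    rpow_sub_int (by linarith) T
  have i3 : ∀ P : Partition T, IntervalIntegrable (EP P (4 * α)) volume 0 T := fun P =>
    (EP_int P (by linarith)).1.intervalIntegrable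
  have i4 : ∀ P : Partition T, ∫ r in (0:ℝ)..T, EP P (4 * α) r ≤ T / (1 - 4 * α) := by
    intro P
    have := EP_int P (γ := 4 * α) (by linarith)
    rw [intervalIntegral.integral_of_le hT.le, ← this.2]
    exact setIntegral_le_integral this.1 (Filter.Eventually.of_forall fun r => EP_nonneg P _ r)
  set A1 := ∫ r in (0:ℝ)..T, r ^ (-(4 * α)) with hA1
  set A2 := ∫ r in (0:ℝ)..T, (T - r) ^ (-(4 * α)) with hA2
  refine ⟨|T + 3 * C ^ 2 * (A1 + A2 + T / (1 - 4 * α) + T / (1 - 4 * α))| + 1, by positivity,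
    fun P Q => ?_⟩
  have j := ((i1.add i2).add (i3 P)).add (i3 Q)
  have j' := j.const_mul (3 * C ^ 2)
  have jj : IntervalIntegrable (fun _ : ℝ => (1:ℝ)) volume 0 T := intervalIntegrable_const
  refine ⟨jj.add j', ?_⟩
  have e : ∫ r in (0:ℝ)..T, GG P Q α C r = T + 3 * C ^ 2 * (A1 + A2 +
      (∫ r in (0:ℝ)..T, EP P (4 * α) r) + ∫ r in (0:ℝ)..T, EP Q (4 * α) r) := by
    have e1 := intervalIntegral.integral_add jj j'
    have e2 := intervalIntegral.integral_add ((i1.add i2).add (i3 P)) (i3 Q)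
    have e3 := intervalIntegral.integral_add (i1.add i2) (i3 P)
    have e4 := intervalIntegral.integral_add i1 i2
    rw [intervalIntegral.integral_const_mul, e2, e3, e4] at e1
    simpa [GG] using e1
  rw [e]
  have := i4 P
  have := i4 Q
  refine le_trans ?_ ((le_abs_self _).trans (le_add_of_nonneg_right zero_le_one))
  gcongr

lemma K_memLp {T α C : ℝ} {K K' : ℝ → ℝ → ℝ} (hT : 0 < T) (hα : 0 ≤ α) (hα' : α < 1 / 4)
    (hK : IsVolterraKernel K) (hA : CondA T α C K K') {t : ℝ} (ht : t ∈ Icc (0:ℝ) T) :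
    MemLp (fun r => K t r) 2 (volume.restrict (Ioc 0 T)) := by
  have hm : Measurable (fun r => K t r) := hK.1.comp (measurable_const.prodMk measurable_id)
  rw [memLp_two_iff_integrable_sq hm.aestronglyMeasurable]
  have i1 : IntervalIntegrable (fun r : ℝ => r ^ (-(4 * α))) volume 0 T :=
    intervalIntegral.intervalIntegrable_rpow' (by linarith)
  have i2 : IntervalIntegrable (fun r : ℝ => (t - r) ^ (-(4 * α))) volume 0 T :=
    rpow_sub_int (by linarith) t
  have i3 := (i1.add i2.norm).const_mul (C ^ 2)
  rw [intervalIntegrable_iff_integrableOn_Ioc_of_le hT.le] at i3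
  refine Integrable.mono' i3 (hm.pow_const 2).aestronglyMeasurable ?_
  filter_upwards [ae_restrict_mem measurableSet_Ioc] with r hr
  rw [Real.norm_eq_abs, abs_of_nonneg (sq_nonneg _)]
  have hr0 : 0 < r := hr.1
  rcases le_or_gt t r with h | h
  · rw [hK.2 t r h]
    have : 0 ≤ C ^ 2 * (r ^ (-(4 * α)) + ‖(t - r) ^ (-(4 * α))‖) := by positivity
    simpa using this
  · have hb := hA.1 r t hr0 h ht.2
    have htr : 0 < t - r := by linarith
    have h1 : (K t r) ^ 2 ≤ (C * r ^ (-α) * (t - r) ^ (-α)) ^ 2 := by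
      rw [← sq_abs]
      exact pow_le_pow_left₀ (abs_nonneg _) hb 2
    refine h1.trans ?_
    have sqn : ∀ z : ℝ, 0 ≤ z → (z ^ (-α)) ^ 2 = z ^ (-(2 * α)) ∧
        (z ^ (-(2 * α))) ^ 2 = z ^ (-(4 * α)) := by
      intro z hz
      rw [← Real.rpow_natCast, ← Real.rpow_natCast, ← Real.rpow_mul hz, ← Real.rpow_mul hz]
      constructor <;> congr 1 <;> push_cast <;> ring
    have h2 := mul_le_sq_aux (r ^ (-(2 * α))) ((t - r) ^ (-(2 * α)))
    rw [(sqn r hr0.le).2, (sqn _ htr.le).2] at h2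
    rw [mul_pow, mul_pow, (sqn r hr0.le).1, (sqn _ htr.le).1, mul_assoc]
    refine mul_le_mul_of_nonneg_left (h2.trans ?_) (sq_nonneg _)
    simp only [Real.norm_eq_abs]
    gcongr
    exact le_abs_self _

lemma K_prod {T α C : ℝ} {K K' : ℝ → ℝ → ℝ} (hT : 0 < T) (hα : 0 ≤ α) (hα' : α < 1 / 4)
    (hK : IsVolterraKernel K) (hA : CondA T α C K K') {s t : ℝ} (hs : s ∈ Icc (0:ℝ) T)
    (ht : t ∈ Icc (0:ℝ) T) :
    IntervalIntegrable (fun r => K t r * K s r) volume 0 T ∧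
      covR K s t = ∫ r in (0:ℝ)..T, K t r * K s r := by
  have hi : IntervalIntegrable (fun r => K t r * K s r) volume 0 T := by
    rw [intervalIntegrable_iff_integrableOn_Ioc_of_le hT.le]
    exact (K_memLp hT hα hα' hK hA ht).integrable_mul (K_memLp hT hα hα' hK hA hs)
  refine ⟨hi, ?_⟩
  have hm0 : 0 ≤ min s t := le_min hs.1 ht.1
  have hmT : min s t ≤ T := (min_le_left _ _).trans hs.2
  have hz : ∫ r in (min s t)..T, K t r * K s r = 0 := by
    rw [intervalIntegral.integral_congr (g := fun _ => (0:ℝ))]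
    · simp
    · intro r hr
      rw [uIcc_of_le hmT] at hr
      simp only
      rcases min_le_iff.1 hr.1 with h | h
      · rw [hK.2 s r h, mul_zero]
      · rw [hK.2 t r h, zero_mul]
  unfold covR
  rw [← intervalIntegral.integral_add_adjacent_intervals (a := 0) (b := min s t) (c := T), hz, add_zero]
  · exact hi.mono_set (by rw [uIcc_of_le hm0, uIcc_of_le hT.le]; exact Icc_subset_Icc le_rfl hmT)
  · exact hi.mono_set (by rw [uIcc_of_le hmT, uIcc_of_le hT.le]; exact Icc_subset_Icc hm0 le_rfl)

lemma RSsum_eq {T α C : ℝ} {K K' : ℝ → ℝ → ℝ} (hT : 0 < T) (hα : 0 ≤ α) (hα' : α < 1 / 4)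
    (hK : IsVolterraKernel K) (hA : CondA T α C K K') (φ : ℝ → ℝ → ℝ) (P Q : Partition T) :
    IntervalIntegrable (fun r => Lsum P (fun x => K x r)
      (fun x => Lsum Q (fun x => K x r) (fun y => φ x y))) volume 0 T ∧
    RSsum P Q φ (covR K) = ∫ r in (0:ℝ)..T, Lsum P (fun x => K x r)
      (fun x => Lsum Q (fun x => K x r) (fun y => φ x y)) := by
  have e : ∀ r, Lsum P (fun x => K x r) (fun x => Lsum Q (fun x => K x r) (fun y => φ x y)) =
      ∑ i ∈ Finset.range P.n, ∑ j ∈ Finset.range Q.n, φ (P.pts i) (Q.pts j) *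
        (K (Q.pts j) r * K (P.pts i) r + K (Q.pts (j + 1)) r * K (P.pts (i + 1)) r -
          K (Q.pts (j + 1)) r * K (P.pts i) r - K (Q.pts j) r * K (P.pts (i + 1)) r) := by
    intro r
    unfold Lsum
    refine Finset.sum_congr rfl fun i _ => ?_
    rw [Finset.sum_mul]
    exact Finset.sum_congr rfl fun j _ => by ring
  simp only [e]
  have hp : ∀ i ∈ Finset.range P.n, ∀ j ∈ Finset.range Q.n,
      IntervalIntegrable (fun r => φ (P.pts i) (Q.pts j) *
        (K (Q.pts j) r * K (P.pts i) r + K (Q.pts (j + 1)) r * K (P.pts (i + 1)) r -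
          K (Q.pts (j + 1)) r * K (P.pts i) r - K (Q.pts j) r * K (P.pts (i + 1)) r)) volume 0 T ∧
      ∫ r in (0:ℝ)..T, φ (P.pts i) (Q.pts j) *
        (K (Q.pts j) r * K (P.pts i) r + K (Q.pts (j + 1)) r * K (P.pts (i + 1)) r -
          K (Q.pts (j + 1)) r * K (P.pts i) r - K (Q.pts j) r * K (P.pts (i + 1)) r) =
      φ (P.pts i) (Q.pts j) * rectInc (covR K) (P.pts i) (P.pts (i + 1)) (Q.pts j)
        (Q.pts (j + 1)) := by
    intro i hi j hj
    rw [Finset.mem_range] at hi hj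
    have hi1 := P.mem hi.le
    have hi2 := P.mem (i := i + 1) hi
    have hj1 := Q.mem hj.le
    have hj2 := Q.mem (i := j + 1) hj
    have a1 := K_prod hT hα hα' hK hA hi1 hj1
    have a2 := K_prod hT hα hα' hK hA hi2 hj2
    have a3 := K_prod hT hα hα' hK hA hi1 hj2
    have a4 := K_prod hT hα hα' hK hA hi2 hj1
    refine ⟨(((a1.1.add a2.1).sub a3.1).sub a4.1).const_mul _, ?_⟩
    rw [intervalIntegral.integral_const_mul, intervalIntegral.integral_sub
      ((a1.1.add a2.1).sub a3.1) a4.1, intervalIntegral.integral_sub (a1.1.add a2.1) a3.1,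
      intervalIntegral.integral_add a1.1 a2.1, ← a1.2, ← a2.2, ← a3.2, ← a4.2]
    rfl
  have hs : ∀ i ∈ Finset.range P.n, IntervalIntegrable (fun r => ∑ j ∈ Finset.range Q.n,
      φ (P.pts i) (Q.pts j) *
        (K (Q.pts j) r * K (P.pts i) r + K (Q.pts (j + 1)) r * K (P.pts (i + 1)) r -
          K (Q.pts (j + 1)) r * K (P.pts i) r - K (Q.pts j) r * K (P.pts (i + 1)) r))
      volume 0 T := by
    intro i hi
    have := IntervalIntegrable.sum (Finset.range Q.n) fun j hj => (hp i hi j hj).1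
    exact this.congr (fun r _ => by simp)
  constructor
  · have := IntervalIntegrable.sum (Finset.range P.n) hs
    exact this.congr (fun r _ => by simp)
  · rw [intervalIntegral.integral_finsetSum hs]
    unfold RSsum
    refine Finset.sum_congr rfl fun i hi => ?_
    rw [intervalIntegral.integral_finsetSum fun j hj => (hp i hi j hj).1]
    exact Finset.sum_congr rfl fun j hj => ((hp i hi j hj).2).symm

def unifPart (T : ℝ) (hT : 0 < T) (N : ℕ) : Partition T where
  n := N + 1
  pts i := T / (N + 1) * i
  n_pos := Nat.succ_pos N
  first := by simp
  last := by push_cast; field_simp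
  lt i _ := by
    have : 0 < T / ((N:ℝ) + 1) := by positivity
    push_cast
    linarith

/-- integrability of a function approximated in L¹ -/
lemma integrable_of_approx {μ : Measure ℝ} {F : ℝ → ℝ} {S G : ℕ → ℝ → ℝ}
    (hS : ∀ n, Integrable (S n) μ) (hG : ∀ n, Integrable (G n) μ)
    (hb : ∀ n, ∀ᵐ r ∂μ, |S n r - F r| ≤ G n r)
    (hlim : Filter.Tendsto (fun n => ∫ r, G n r ∂μ) Filter.atTop (nhds 0)) :
    Integrable F μ := by
  have hG0 : ∀ n, 0 ≤ᵐ[μ] G n := fun n => by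
    filter_upwards [hb n] with r hr using (abs_nonneg _).trans hr
  have h1 : Filter.Tendsto (fun n => eLpNorm (G n - 0) 1 μ) Filter.atTop (nhds 0) := by
    have e : ∀ n, eLpNorm (G n - 0) 1 μ = ENNReal.ofReal (∫ r, G n r ∂μ) := by
      intro n
      rw [sub_zero, eLpNorm_one_eq_lintegral_enorm, ofReal_integral_eq_lintegral_ofReal (hG n)
        (hG0 n)]
      refine lintegral_congr_ae ?_
      filter_upwards [hG0 n] with r hr
      exact Real.enorm_eq_ofReal hr
    simp_rw [e]
    simpa using ENNReal.tendsto_ofReal hlim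
  have h2 := tendstoInMeasure_of_tendsto_eLpNorm one_ne_zero
    (fun n => (hG n).aestronglyMeasurable) aestronglyMeasurable_zero h1
  obtain ⟨ns, -, hns⟩ := h2.exists_seq_tendsto_ae
  have hm : AEStronglyMeasurable F μ := by
    refine aestronglyMeasurable_of_tendsto_ae Filter.atTop (f := fun n => S (ns n))
      (fun n => (hS (ns n)).aestronglyMeasurable) ?_
    filter_upwards [hns, ae_all_iff.2 hb] with r h3 h4
    rw [tendsto_iff_dist_tendsto_zero]
    refine squeeze_zero (fun _ => dist_nonneg) (fun n => ?_) h3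
    rw [Real.dist_eq]
    exact h4 (ns n)
  have : Integrable (fun r => S 0 r - F r) μ :=
    Integrable.mono' (hG 0) ((hS 0).aestronglyMeasurable.sub hm) (hb 0)
  have h5 := (hS 0).sub this
  refine h5.congr (Filter.Eventually.of_forall fun r => ?_)
  simp

lemma strong_case {T α β C M : ℝ} {K K' : ℝ → ℝ → ℝ} {φ : ℝ → ℝ → ℝ} (hT : 0 < T)
    (hα : 0 ≤ α) (hα' : α < 1 / 4) (hK : IsVolterraKernel K) (hA : CondA T α C K K')
    (hαβ : α < β) (hM : 0 ≤ M) (hφ : IsStrongHolderBiWith T β M φ) :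
    ∀ ε > 0, ∃ δ > 0, ∀ P Q : Partition T, max P.mesh Q.mesh < δ →
      |RSsum P Q φ (covR K) - ∫ r in (0:ℝ)..T, KstarT T K K' φ r r| < ε := by
  have hC : 0 ≤ C := by
    have h := (hA.2 (T / 2) T (by linarith) (by linarith) le_rfl).2
    have hp : 0 < (T - T / 2) ^ (-(α + 1)) := Real.rpow_pos_of_pos (by linarith) _
    by_contra hc
    push Not at hc
    have := mul_neg_of_neg_of_pos hc hp
    linarith [abs_nonneg (K' T (T / 2))]
  obtain ⟨κ, hκ, hβ⟩ : ∃ κ : ℝ, 0 < κ ∧ β = α + 2 * κ := ⟨(β - α) / 2, by linarith, by ring⟩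
  obtain ⟨W, hW, hGW⟩ := GG_bound T α C hT hα'
  have hsl : ∀ r, 0 < r → r < T →
      Slice T r α C (C * r ^ (-α)) (fun x => K x r) (fun x => K' x r) := by
    intro r h0 h1
    exact ⟨h0, h1, hC, by positivity, fun x hx => hK.2 x r hx,
      fun x h2 h3 => (hA.2 r x h0 h2 h3).1, fun x h2 h3 => (hA.2 r x h0 h2 h3).2,
      fun x h2 h3 => hA.1 r x h0 h2 h3⟩
  set Z := M * (6 * (1 + T ^ κ * T ^ κ + T ^ κ +
        2 * (T ^ κ * (C * T ^ κ / κ)) + C * T ^ κ / κ) ^ 2) with hZ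
  have hZ0 : 0 ≤ Z := by positivity
  have hpt : ∀ δ, 0 ≤ δ → δ ≤ T → ∀ P Q : Partition T,
      (∀ i < P.n, P.pts (i + 1) - P.pts i ≤ δ) → (∀ i < Q.n, Q.pts (i + 1) - Q.pts i ≤ δ) →
      ∀ᵐ r ∂(volume.restrict (Ioc 0 T)),
      |Lsum P (fun x => K x r) (fun x => Lsum Q (fun x => K x r) (fun y => φ x y)) -
      KstarT T K K' φ r r| ≤ Z * δ ^ κ * GG P Q α C r := by
    intro δ hδ hδT P Q hP hQ
    rw [← restrict_Ioo_eq_restrict_Ioc]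
    filter_upwards [ae_restrict_mem measurableSet_Ioo] with r hr
    obtain ⟨a, ha, ha1, ha2⟩ := P.exists_idx hr.1.le hr.2
    obtain ⟨b, hb, hb1, hb2⟩ := Q.exists_idx hr.1.le hr.2
    refine ((hsl r hr.1 hr.2).main hα hκ hβ hM hφ hδ hδT P Q hP hQ ha ha1 ha2 hb hb1 hb2).trans ?_
    have l1 := le_EP P (4 * α) ha ha1 ha2
    have l2 := le_EP Q (4 * α) hb hb1 hb2
    have : 0 ≤ δ ^ κ := by positivity
    rw [show ∀ x y z : ℝ, M * x * y * z = M * y * x * z from fun x y z => by ring, ← hZ]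
    unfold GG
    gcongr
  have hGi : ∀ P Q : Partition T, Integrable (GG P Q α C) (volume.restrict (Ioc 0 T)) := by
    intro P Q
    have := (hGW P Q).1
    rwa [intervalIntegrable_iff_integrableOn_Ioc_of_le hT.le] at this
  have hSi : ∀ P Q : Partition T, Integrable (fun r => Lsum P (fun x => K x r)
      (fun x => Lsum Q (fun x => K x r) (fun y => φ x y))) (volume.restrict (Ioc 0 T)) := by
    intro P Q
    have := (RSsum_eq hT hα hα' hK hA φ P Q).1
    rwa [intervalIntegrable_iff_integrableOn_Ioc_of_le hT.le] at this
  have hGb : ∀ δ, 0 ≤ δ → ∀ P Q : Partition T,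
      ∫ r in Ioc 0 T, Z * δ ^ κ * GG P Q α C r ≤ Z * δ ^ κ * W := by
    intro δ hδ P Q
    rw [integral_const_mul]
    have := (hGW P Q).2
    rw [intervalIntegral.integral_of_le hT.le] at this
    gcongr
  have hFi : Integrable (fun r => KstarT T K K' φ r r) (volume.restrict (Ioc 0 T)) := by
    have hb := fun N : ℕ => hpt (T / (N + 1)) (by positivity)
      (div_le_self hT.le (by have : (0:ℝ) ≤ N := N.cast_nonneg
                             linarith)) (unifPart T hT N) (unifPart T hT N)
      (fun i _ => by simp only [unifPart]; push_cast; linarith)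
      (fun i _ => by simp only [unifPart]; push_cast; linarith)
    refine integrable_of_approx (fun N => hSi _ _) (fun N => (hGi _ _).const_mul _) hb ?_
    have hlim : Filter.Tendsto (fun N : ℕ => Z * (T / ((N:ℝ) + 1)) ^ κ * W) Filter.atTop
        (nhds 0) := by
      have t1 : Filter.Tendsto (fun N : ℕ => T / ((N:ℝ) + 1)) Filter.atTop (nhds 0) := by
        have := (tendsto_one_div_add_atTop_nhds_zero_nat (𝕜 := ℝ)).const_mul T
        simpa [mul_one_div, div_eq_mul_inv] using this
      have t2 := t1.rpow_const (p := κ) (Or.inr hκ.le)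
      rw [Real.zero_rpow hκ.ne'] at t2
      simpa using (t2.const_mul Z).mul_const W
    refine squeeze_zero (fun N => ?_) (fun N => hGb _ (by positivity) _ _) hlim
    refine integral_nonneg_of_ae ?_
    filter_upwards [hb N] with r hr using (abs_nonneg _).trans hr
  intro ε hε
  -- choice of δ
  have hZW : 0 < Z * W + 1 := by positivity
  set η := ε / (Z * W + 1) with hη
  have hη0 : 0 < η := by positivity
  refine ⟨min T (η ^ (1 / κ)), lt_min hT (by positivity), fun P Q hPQ => ?_⟩
  set δ := min T (η ^ (1 / κ)) with hδ
  have hδ0 : 0 ≤ δ := le_min hT.le (by positivity)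
  have hmesh : ∀ P : Partition T, P.mesh < δ → ∀ i < P.n, P.pts (i + 1) - P.pts i ≤ δ := by
    intro P hP i hi
    refine le_trans ?_ hP.le
    exact Finset.le_sup' (fun i => P.pts (i + 1) - P.pts i) (Finset.mem_range.2 hi)
  have hb := hpt δ hδ0 (min_le_left _ _) P Q (hmesh P ((le_max_left _ _).trans_lt hPQ))
    (hmesh Q ((le_max_right _ _).trans_lt hPQ))
  rw [(RSsum_eq hT hα hα' hK hA φ P Q).2, intervalIntegral.integral_of_le hT.le,
    intervalIntegral.integral_of_le hT.le, ← integral_sub (hSi P Q) hFi]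
  have h1 := norm_integral_le_of_norm_le (f := fun r => Lsum P (fun x => K x r)
      (fun x => Lsum Q (fun x => K x r) (fun y => φ x y)) - KstarT T K K' φ r r) ((hGi P Q).const_mul (Z * δ ^ κ)) hb
  have hδκ : δ ^ κ ≤ η := by
    calc δ ^ κ ≤ (η ^ (1 / κ)) ^ κ := Real.rpow_le_rpow hδ0 (min_le_right _ _) hκ.le
      _ = η := by rw [← Real.rpow_mul hη0.le, one_div_mul_cancel hκ.ne', Real.rpow_one]
  calc _ ≤ Z * δ ^ κ * W := h1.trans (hGb δ hδ0 P Q)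
    _ ≤ Z * η * W := by gcongr
    _ < (Z * W + 1) * η := by linarith
    _ = ε := by rw [hη]; field_simp

lemma strong_of_bi {T lam C : ℝ} {φ : ℝ → ℝ → ℝ} (hT : 0 < T) (hlam : 0 < lam)
    (hC : 0 ≤ C) (h : IsHolderBiWith T lam C φ) :
    ∃ M, 0 ≤ M ∧ IsStrongHolderBiWith T (lam / 2) M φ := by
  have habs : ∀ x ∈ Icc (0:ℝ) T, ∀ y ∈ Icc (0:ℝ) T, |x - y| ≤ T := by
    intro x hx y hy
    rw [abs_le]
    constructor <;> linarith [hx.1, hx.2, hy.1, hy.2]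
  have hp : ∀ z : ℝ, 0 ≤ z → z ^ lam = z ^ (lam / 2) * z ^ (lam / 2) := by
    intro z hz
    rw [← Real.rpow_add_of_nonneg hz (by linarith) (by linarith)]
    ring_nf
  have hle : ∀ x ∈ Icc (0:ℝ) T, ∀ y ∈ Icc (0:ℝ) T,
      C * |x - y| ^ lam ≤ (C * T ^ (lam / 2) + 2 * C) * |x - y| ^ (lam / 2) := by
    intro x hx y hy
    rw [hp _ (abs_nonneg _)]
    have h1 : |x - y| ^ (lam / 2) ≤ T ^ (lam / 2) :=
      Real.rpow_le_rpow (abs_nonneg _) (habs x hx y hy) (by linarith)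
    have h2 : 0 ≤ |x - y| ^ (lam / 2) := by positivity
    calc C * (|x - y| ^ (lam / 2) * |x - y| ^ (lam / 2)) ≤
        C * (T ^ (lam / 2) * |x - y| ^ (lam / 2)) := by gcongr
      _ ≤ _ := by nlinarith [mul_nonneg hC h2]
  refine ⟨C * T ^ (lam / 2) + 2 * C, by positivity, ⟨fun u₁ h1 u₂ h2 v hv => ?_,
    fun u hu v₁ h1 v₂ h2 => ?_⟩, ?_⟩
  · exact (h.1 u₁ h1 u₂ h2 v hv).trans (hle u₂ h2 u₁ h1)
  · exact (h.2 u hu v₁ h1 v₂ h2).trans (hle v₂ h2 v₁ h1)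
  · intro u₁ hu1 u₂ hu2 v₁ hv1 v₂ hv2
    have a1 := h.1 u₁ hu1 u₂ hu2 v₂ hv2
    have a2 := h.1 u₁ hu1 u₂ hu2 v₁ hv1
    have a3 := h.2 u₂ hu2 v₁ hv1 v₂ hv2
    have a4 := h.2 u₁ hu1 v₁ hv1 v₂ hv2
    rw [Real.norm_eq_abs] at *
    set x := |u₂ - u₁| with hx
    set y := |v₂ - v₁| with hy
    have b1 : |rectInc φ u₁ u₂ v₁ v₂| ≤ 2 * C * x ^ lam := by
      have : rectInc φ u₁ u₂ v₁ v₂ = (φ u₂ v₂ - φ u₁ v₂) - (φ u₂ v₁ - φ u₁ v₁) := by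
        unfold rectInc; ring
      rw [this]
      refine (abs_sub _ _).trans ?_
      linarith
    have b2 : |rectInc φ u₁ u₂ v₁ v₂| ≤ 2 * C * y ^ lam := by
      have : rectInc φ u₁ u₂ v₁ v₂ = (φ u₂ v₂ - φ u₂ v₁) - (φ u₁ v₂ - φ u₁ v₁) := by
        unfold rectInc; ring
      rw [this]
      refine (abs_sub _ _).trans ?_
      linarith
    have hx0 : 0 ≤ x := abs_nonneg _
    have hy0 : 0 ≤ y := abs_nonneg _
    have b3 : |rectInc φ u₁ u₂ v₁ v₂| ≤ 2 * C * (x ^ (lam / 2) * y ^ (lam / 2)) := by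
      rcases le_total x y with hxy | hxy
      · refine b1.trans ?_
        rw [hp x hx0]
        gcongr
      · refine b2.trans ?_
        rw [hp y hy0]
        gcongr
    refine b3.trans ?_
    rw [mul_assoc (C * T ^ (lam / 2) + 2 * C)]
    have : 0 ≤ C * T ^ (lam / 2) := by positivity
    gcongr
    linarith

lemma strong_mono {T lam C : ℝ} {φ : ℝ → ℝ → ℝ} (h : IsStrongHolderBiWith T lam C φ) :
    IsStrongHolderBiWith T lam |C| φ := by
  have hC := le_abs_self C
  refine ⟨⟨fun u₁ h1 u₂ h2 v hv => (h.1.1 u₁ h1 u₂ h2 v hv).trans (by gcongr),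
    fun u hu v₁ h1 v₂ h2 => (h.1.2 u hu v₁ h1 v₂ h2).trans (by gcongr)⟩,
    fun u₁ hu1 u₂ hu2 v₁ hv1 v₂ hv2 => (h.2 u₁ hu1 u₂ hu2 v₁ hv1 v₂ hv2).trans (by gcongr)⟩

lemma bi_mono {T lam C : ℝ} {φ : ℝ → ℝ → ℝ} (h : IsHolderBiWith T lam C φ) :
    IsHolderBiWith T lam |C| φ := by
  have hC := le_abs_self C
  exact ⟨fun u₁ h1 u₂ h2 v hv => (h.1 u₁ h1 u₂ h2 v hv).trans (by gcongr),
    fun u hu v₁ h1 v₂ h2 => (h.2 u hu v₁ h1 v₂ h2).trans (by gcongr)⟩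

/-- Proposition 4.3: existence of the 2D Young–Stieltjes integral
`∫_{[0,T]²} φ dR` and its identification with `∫_0^T (𝒦*⊗𝒦*)φ(r,r) dr`. -/
theorem youngIntegral_covR_exists (T α lam : ℝ) (hT : 0 < T) (hα : 0 ≤ α) (hα' : α < 1 / 4)
    (K K' : ℝ → ℝ → ℝ) (hK : IsVolterraKernel K) (hA : ∃ C : ℝ, CondA T α C K K')
    (φ : ℝ → ℝ → ℝ) (hlam : 0 < lam) (hlam' : lam ≤ 1)
    (hφ : (IsStrongHolderBi T lam φ ∧ α < lam) ∨ (IsHolderBi T lam φ ∧ 2 * α < lam)) :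
    ∀ ε > 0, ∃ δ > 0, ∀ P Q : Partition T, max P.mesh Q.mesh < δ →
      |RSsum P Q φ (covR K) - ∫ r in (0:ℝ)..T, KstarT T K K' φ r r| < ε := by
  obtain ⟨C, hC⟩ := hA
  rcases hφ with ⟨⟨M, hM⟩, hl⟩ | ⟨⟨M, hM⟩, hl⟩
  · exact strong_case hT hα hα' hK hC hl (abs_nonneg M) (strong_mono hM)
  · obtain ⟨M', hM0, hM'⟩ := strong_of_bi hT hlam (abs_nonneg M) (bi_mono hM)
    exact strong_case hT hα hα' hK hC (by linarith) hM0 hM'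

end YS
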